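/- arXiv:1111.5003 — 4 statements merged into one kernel-verified Lean document; each statement's English description precedes it below -/
import Mathlib

section
/- Let C ⊆ {0,1}^M be a constant weight binary code of size N, weight w, minimum distance d and average distance D, let 1 ≤ t < N, let 0 < ε < 1, and let α be a suitable absolute constant (α ≥ √2·(1 + t/(N-1)) suffices). If α·√(t·ln(2(N-t)/ε)) ≤ (w - 1 - t(w - D/2))/(w - d/2), then the M×N matrix whose columns are the codewords of C is type-1 (t,ε)-disjunct: there is a family B of t-element subsets of columns with |B| ≥ (1-ε)·binom(N,t) such that for every S ∈ B and every column ν ∉ S, the support of ν is not contained in the union of the supports of the columns in S. -/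
/-- The support of a binary vector: the set of coordinates where it equals `true`. -/
def bsupp {M : ℕ} (x : Fin M → Bool) : Finset (Fin M) :=
  Finset.univ.filter fun i => x i = true

/-- Re-indexing sums over a subset and a point in it. -/
lemma sum_pc_point {β : Type*} [DecidableEq β] (X : Finset β) (k : ℕ)
    (F : Finset β → β → ℝ) :
    ∑ S ∈ X.powersetCard (k+1), ∑ y ∈ S, F (S.erase y) y
      = ∑ T ∈ X.powersetCard k, ∑ y ∈ X \ T, F T y := by
  rw [Finset.sum_sigma', Finset.sum_sigma']
  refine Finset.sum_bij' (fun p _ => ⟨p.1.erase p.2, p.2⟩) (fun p _ => ⟨insert p.2 p.1, p.2⟩)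
    ?_ ?_ ?_ ?_ ?_
  · rintro ⟨S, y⟩ h
    simp only [Finset.mem_sigma, Finset.mem_powersetCard, Finset.mem_sdiff] at h ⊢
    obtain ⟨⟨h1, h2⟩, h3⟩ := h
    refine ⟨⟨(Finset.erase_subset _ _).trans h1, ?_⟩, h1 h3, by simp⟩
    rw [Finset.card_erase_of_mem h3, h2]; rfl
  · rintro ⟨S, y⟩ h
    simp only [Finset.mem_sigma, Finset.mem_powersetCard, Finset.mem_sdiff] at h ⊢
    obtain ⟨⟨h1, h2⟩, h3, h4⟩ := h
    refine ⟨⟨Finset.insert_subset h3 h1, ?_⟩, by simp⟩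
    rw [Finset.card_insert_of_notMem h4, h2]
  · rintro ⟨S, y⟩ h
    simp only [Finset.mem_sigma] at h
    simp [Finset.insert_erase h.2]
  · rintro ⟨S, y⟩ h
    simp only [Finset.mem_sigma, Finset.mem_sdiff] at h
    simp [Finset.erase_insert h.2.2]
  · rintro ⟨S, y⟩ h
    rfl

/-- Elementary symmetric sums. -/
noncomputable def esy {β : Type*} [DecidableEq β] (X : Finset β) (a : β → ℝ) (k : ℕ) : ℝ :=
  ∑ S ∈ X.powersetCard k, ∏ y ∈ S, a y

lemma esy_succ {β : Type*} [DecidableEq β] (X : Finset β) (a : β → ℝ) (k : ℕ) :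
    ((k : ℝ) + 1) * esy X a (k+1)
      = ∑ T ∈ X.powersetCard k, (∏ y ∈ T, a y) * ∑ z ∈ X \ T, a z := by
  have h := sum_pc_point X k (fun T y => (∏ z ∈ T, a z) * a y)
  simp only [← Finset.mul_sum] at h
  rw [← h, esy, Finset.mul_sum]
  refine Finset.sum_congr rfl fun S hS => ?_
  rw [Finset.sum_congr rfl (fun y hy => Finset.prod_erase_mul S a hy), Finset.sum_const,
    (Finset.mem_powersetCard.1 hS).2]
  simp

lemma esy_step {β : Type*} [DecidableEq β] (X : Finset β) (a : β → ℝ)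
    (ha : ∀ y, 0 ≤ a y) (k : ℕ) (hk : k ≤ X.card) :
    (X.card : ℝ) * (((k : ℝ) + 1) * esy X a (k+1))
      ≤ ((X.card : ℝ) - k) * (esy X a k * ∑ y ∈ X, a y) := by
  rcases k with _ | k
  · have := esy_succ X a 0
    simp only [Nat.cast_zero, zero_add, Finset.powersetCard_zero, Finset.sum_singleton,
      Finset.prod_empty, one_mul, Finset.sdiff_empty] at this
    rw [zero_add, Nat.cast_zero, zero_add, one_mul, this]
    simp [esy]
  set A : ℝ := ∑ S ∈ X.powersetCard (k+1), (∏ y ∈ S, a y) * ∑ y ∈ S, a y with hA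
  have e1 : esy X a (k+1) * ∑ y ∈ X, a y
      = A + (((k + 1 : ℕ) : ℝ) + 1) * esy X a (k+1+1) := by
    rw [esy_succ, hA, ← Finset.sum_add_distrib, esy, Finset.sum_mul]
    refine Finset.sum_congr rfl fun S hS => ?_
    rw [← mul_add, add_comm (∑ y ∈ S, a y), Finset.sum_sdiff (Finset.mem_powersetCard.1 hS).1]
  have e2 : A = ∑ T ∈ X.powersetCard k, (∏ y ∈ T, a y) * ∑ y ∈ X \ T, a y ^ 2 := by
    have h := sum_pc_point X k (fun T y => (∏ z ∈ T, a z) * a y ^ 2)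
    simp only [← Finset.mul_sum] at h
    rw [← h, hA]
    refine Finset.sum_congr rfl fun S hS => ?_
    rw [Finset.mul_sum]
    refine Finset.sum_congr rfl fun y hy => ?_
    rw [← Finset.prod_erase_mul S a hy]; ring
  have e3 : ((k : ℝ) + 1) * ((((k + 1 : ℕ) : ℝ) + 1) * esy X a (k+1+1))
      = ∑ T ∈ X.powersetCard k, (∏ y ∈ T, a y) *
          ((∑ y ∈ X \ T, a y) ^ 2 - ∑ y ∈ X \ T, a y ^ 2) := by
    have h := sum_pc_point X k
      (fun T y => (∏ z ∈ T, a z) * (a y * ((∑ z ∈ X \ T, a z) - a y)))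
    simp only [← Finset.mul_sum] at h
    rw [esy_succ]
    have h2 : ∀ T, (∏ y ∈ T, a y) * ((∑ y ∈ X \ T, a y) ^ 2 - ∑ y ∈ X \ T, a y ^ 2)
        = (∏ z ∈ T, a z) * ∑ y ∈ X \ T, (a y * ((∑ z ∈ X \ T, a z) - a y)) := by
      intro T
      congr 1
      simp only [mul_sub, Finset.sum_sub_distrib, ← Finset.sum_mul]
      simp only [sq]
    simp only [h2]
    rw [← h, Finset.mul_sum]
    refine Finset.sum_congr rfl fun S hS => ?_
    obtain ⟨h3, h4⟩ := Finset.mem_powersetCard.1 hS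
    trans ∑ y ∈ S, (∏ y ∈ S, a y) * ∑ z ∈ X \ S, a z
    · rw [Finset.sum_const, h4]
      simp
    refine Finset.sum_congr rfl fun y hy => ?_
    have h5 : X \ S.erase y = insert y (X \ S) := by
      ext z
      by_cases hz : z = y
      · subst hz; simp [h3 hy]
      · simp [hz]
    rw [h5, Finset.sum_insert (by simp [hy]), ← Finset.prod_erase_mul S a hy]
    ring
  have e4 : ((k : ℝ) + 1) * ((((k + 1 : ℕ) : ℝ) + 1) * esy X a (k+1+1))
      ≤ ((X.card : ℝ) - (k + 1 : ℕ)) * A := by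
    rw [e3, e2, Finset.mul_sum]
    refine Finset.sum_le_sum fun T hT => ?_
    obtain ⟨h3, h4⟩ := Finset.mem_powersetCard.1 hT
    have hp : 0 ≤ ∏ y ∈ T, a y := Finset.prod_nonneg fun y _ => ha y
    have hc : ((X \ T).card : ℝ) = (X.card : ℝ) - k := by
      rw [Finset.card_sdiff_of_subset h3, h4, Nat.cast_sub (by omega)]
    have cs := sq_sum_le_card_mul_sum_sq (s := X \ T) (f := a)
    rw [hc] at cs
    rw [mul_left_comm]
    refine mul_le_mul_of_nonneg_left ?_ hp
    push_cast
    linarith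
  rw [e1]
  push_cast at e4 ⊢
  nlinarith

lemma esy_le {β : Type*} [DecidableEq β] (X : Finset β) (a : β → ℝ)
    (ha : ∀ y, 0 ≤ a y) (hX : 0 < X.card) (k : ℕ) (hk : k ≤ X.card) :
    esy X a k ≤ (X.card.choose k : ℝ) * ((∑ y ∈ X, a y) / X.card) ^ k := by
  induction k with
  | zero => simp [esy]
  | succ k ih =>
    have ih := ih (by omega)
    have hs := esy_step X a ha k (by omega)
    have hn : (0 : ℝ) < X.card := by exact_mod_cast hX
    have hsum : 0 ≤ ∑ y ∈ X, a y := Finset.sum_nonneg fun y _ => ha y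
    have hkn : (0 : ℝ) ≤ (X.card : ℝ) - k := by
      have : (k : ℝ) ≤ X.card := by exact_mod_cast (by omega : k ≤ X.card)
      linarith
    have hch : (X.card.choose (k+1) : ℝ) * (k + 1) = X.card.choose k * ((X.card : ℝ) - k) := by
      have := Nat.choose_succ_right_eq X.card k
      rw [← Nat.cast_sub (by omega)]
      exact_mod_cast this
    set m := (∑ y ∈ X, a y) / X.card with hm
    have hm' : ∑ y ∈ X, a y = m * X.card := (div_mul_cancel₀ _ hn.ne').symm
    have hm0 : 0 ≤ m := div_nonneg hsum hn.le
    rw [hm'] at hs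
    have h1 : ((k : ℝ) + 1) * esy X a (k+1) ≤ ((X.card : ℝ) - k) * m * esy X a k := by
      have : (X.card : ℝ) * (((k : ℝ) + 1) * esy X a (k+1))
        ≤ X.card * (((X.card : ℝ) - k) * m * esy X a k) := by linarith
      exact le_of_mul_le_mul_left this hn
    have h2 := mul_le_mul_of_nonneg_left ih (mul_nonneg hkn hm0)
    have h3 : ((k : ℝ) + 1) * esy X a (k+1)
        ≤ ((k : ℝ) + 1) * ((X.card.choose (k+1) : ℝ) * m ^ (k+1)) := by
      calc _ ≤ _ := h1.trans h2
        _ = (X.card.choose k * ((X.card : ℝ) - k)) * m ^ (k+1) := by ring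
        _ = _ := by rw [← hch]; ring
    exact le_of_mul_le_mul_left h3 (by positivity)

/-- Convexity bound for the exponential. -/
lemma exp_le_chord (u s : ℝ) (hs : |s| ≤ 1) :
    Real.exp (u * s) ≤ Real.cosh u + s * Real.sinh u := by
  obtain ⟨h1, h2⟩ := abs_le.1 hs
  have ha : (0 : ℝ) ≤ (1 + s) / 2 := by linarith
  have hb : (0 : ℝ) ≤ (1 - s) / 2 := by linarith
  have hab : (1 + s) / 2 + (1 - s) / 2 = 1 := by ring
  have := convexOn_exp.2 (Set.mem_univ u) (Set.mem_univ (-u)) ha hb hab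
  simp only [smul_eq_mul] at this
  rw [show (1 + s) / 2 * u + (1 - s) / 2 * -u = u * s by ring] at this
  rw [Real.cosh_eq, Real.sinh_eq]
  linarith

lemma mean_exp_le {β : Type*} (X : Finset β) (hX : 0 < X.card)
    (f : β → ℝ) (b l m : ℝ) (hb : 0 < b) (hf0 : ∀ y ∈ X, 0 ≤ f y) (hfb : ∀ y ∈ X, f y ≤ b)
    (hm : m = (∑ y ∈ X, f y) / X.card) :
    (∑ y ∈ X, Real.exp (l * f y)) / X.card ≤ Real.exp (l * m + (l * b) ^ 2 / 2) := by
  have hn : (0 : ℝ) < X.card := by exact_mod_cast hX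
  have hsum : ∑ y ∈ X, f y = X.card * m := by rw [hm]; field_simp
  have hm0 : 0 ≤ m := by rw [hm]; exact div_nonneg (Finset.sum_nonneg hf0) hn.le
  have hmb : m ≤ b := by
    have := Finset.sum_le_card_nsmul X f b hfb
    rw [hsum, nsmul_eq_mul] at this
    exact le_of_mul_le_mul_left this hn
  have h1 : ∀ y ∈ X, Real.exp (l * f y)
      ≤ Real.exp (l * m) * (Real.cosh (l * b) + (f y - m) / b * Real.sinh (l * b)) := by
    intro y hy
    have h2 := exp_le_chord (l * b) ((f y - m) / b) (by
      rw [abs_div, abs_of_pos hb, div_le_one hb, abs_le]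
      constructor <;> linarith [hf0 y hy, hfb y hy])
    rw [show l * f y = l * m + l * b * ((f y - m) / b) by field_simp; ring, Real.exp_add]
    exact mul_le_mul_of_nonneg_left h2 (Real.exp_pos _).le
  have h3 := Finset.sum_le_sum h1
  rw [← Finset.mul_sum, Finset.sum_add_distrib, ← Finset.sum_mul, ← Finset.sum_div,
    Finset.sum_sub_distrib, hsum] at h3
  simp only [Finset.sum_const, nsmul_eq_mul, sub_self, zero_div, zero_mul, add_zero] at h3
  rw [div_le_iff₀ hn, Real.exp_add]
  refine h3.trans ?_
  have := mul_le_mul_of_nonneg_left (Real.cosh_le_exp_half_sq (l * b))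
    (mul_nonneg (Real.exp_pos (l * m)).le hn.le)
  linarith

/-- Hoeffding-type bound for sampling without replacement. -/
lemma tail_bound {β : Type*} [DecidableEq β] (X : Finset β) (t : ℕ) (ht : 1 ≤ t)
    (htX : t ≤ X.card) (f : β → ℝ) (b r v : ℝ) (hb : 0 < b) (hr : 0 ≤ r)
    (hf0 : ∀ y ∈ X, 0 ≤ f y) (hfb : ∀ y ∈ X, f y ≤ b)
    (hdev : b * r ≤ v - t * ((∑ y ∈ X, f y) / X.card)) :
    (((X.powersetCard t).filter fun S => v ≤ ∑ y ∈ S, f y).card : ℝ)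
      ≤ X.card.choose t * Real.exp (- (r ^ 2 / (2 * t))) := by
  have hX : 0 < X.card := by omega
  have ht0 : (0 : ℝ) < t := by exact_mod_cast ht
  set m := (∑ y ∈ X, f y) / X.card with hm
  set l : ℝ := r / (t * b) with hl
  have hl0 : 0 ≤ l := by positivity
  have h1 : (((X.powersetCard t).filter fun S => v ≤ ∑ y ∈ S, f y).card : ℝ) * Real.exp (l * v)
      ≤ esy X (fun y => Real.exp (l * f y)) t := by
    rw [esy, ← nsmul_eq_mul, ← Finset.sum_const]
    refine le_trans (Finset.sum_le_sum (g := fun S => ∏ y ∈ S, Real.exp (l * f y)) ?_)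
      (Finset.sum_le_sum_of_subset_of_nonneg (Finset.filter_subset _ _) ?_)
    · intro S hS
      rw [← Real.exp_sum, ← Finset.mul_sum]
      exact Real.exp_le_exp.2 (mul_le_mul_of_nonneg_left (Finset.mem_filter.1 hS).2 hl0)
    · intros
      exact Finset.prod_nonneg fun _ _ => (Real.exp_pos _).le
  have h2 := esy_le X (fun y => Real.exp (l * f y)) (fun _ => (Real.exp_pos _).le) hX t htX
  have h3 := mean_exp_le X hX f b l m hb hf0 hfb hm
  have h4 : ((∑ y ∈ X, Real.exp (l * f y)) / X.card) ^ t
      ≤ Real.exp (t * (l * m + (l * b) ^ 2 / 2)) := by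
    rw [Real.exp_nat_mul]
    exact pow_le_pow_left₀ (div_nonneg (Finset.sum_nonneg fun _ _ => (Real.exp_pos _).le)
      (Nat.cast_nonneg _)) h3 t
  have h5 : t * (l * m + (l * b) ^ 2 / 2) ≤ - (r ^ 2 / (2 * t)) + l * v := by
    have h6 := mul_le_mul_of_nonneg_left hdev hl0
    have h7 : l * (b * r) = r ^ 2 / t := by rw [hl]; field_simp
    have h8 : t * ((l * b) ^ 2 / 2) = r ^ 2 / t / 2 := by rw [hl]; field_simp
    have h9 : r ^ 2 / (2 * t) = r ^ 2 / t / 2 := by field_simp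
    rw [h9, mul_add, h8]
    rw [h7] at h6
    linarith
  have h6 : (((X.powersetCard t).filter fun S => v ≤ ∑ y ∈ S, f y).card : ℝ) * Real.exp (l * v)
      ≤ (X.card.choose t * Real.exp (- (r ^ 2 / (2 * t)))) * Real.exp (l * v) := by
    refine h1.trans (h2.trans ?_)
    rw [mul_assoc, ← Real.exp_add]
    exact mul_le_mul_of_nonneg_left (h4.trans (Real.exp_le_exp.2 h5)) (Nat.cast_nonneg _)
  exact le_of_mul_le_mul_right h6 (Real.exp_pos _)

lemma overlap_eq {M w : ℕ} (x y : Fin M → Bool) (hx : (bsupp x).card = w)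
    (hy : (bsupp y).card = w) :
    ((bsupp x ∩ bsupp y).card : ℝ) = w - (hammingDist x y : ℝ) / 2 := by
  have h1 : hammingDist x y = (bsupp x \ bsupp y).card + (bsupp y \ bsupp x).card := by
    rw [← Finset.card_union_of_disjoint disjoint_sdiff_sdiff, hammingDist]
    congr 1
    ext i
    simp only [bsupp, Finset.mem_filter, Finset.mem_univ, true_and, Finset.mem_union,
      Finset.mem_sdiff]
    cases x i <;> cases y i <;> simp
  have h2 := Finset.card_sdiff_add_card_inter (bsupp x) (bsupp y)
  have h3 := Finset.card_sdiff_add_card_inter (bsupp y) (bsupp x)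
  rw [Finset.inter_comm (bsupp y)] at h3
  have h4 : hammingDist x y + 2 * (bsupp x ∩ bsupp y).card = 2 * w := by omega
  have h5 : (hammingDist x y : ℝ) + 2 * ((bsupp x ∩ bsupp y).card : ℝ) = 2 * w := by
    exact_mod_cast h4
  linarith

/-- Type-1 version of Theorem 1: a constant weight binary code of length `M`, size `N`,
weight `w`, minimum distance `d` and average distance `D` yields a type-1 `(t,ε)`-disjunct
matrix provided `α·√(t·ln(2(N-t)/ε)) ≤ (w - 1 - t(w - D/2))/(w - d/2)` where
`α ≥ √2·(1 + t/(N-1))`: at least `(1-ε)·C(N,t)` of the `t`-element subsets `S` of the code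
have the property that no codeword outside `S` has its support contained in the union of the
supports of the codewords of `S`. -/
theorem stmt_3 (M N w d t : ℕ) (D α ε : ℝ)
    (ht : 1 ≤ t) (htN : t < N)
    (hε0 : 0 < ε) (hε1 : ε < 1)
    (C : Finset (Fin M → Bool)) (hCN : C.card = N) (hC : C.Nonempty)
    (hw : ∀ x ∈ C, (bsupp x).card = w)
    (hd : ∀ x ∈ C, ∀ y ∈ C, x ≠ y → d ≤ hammingDist x y)
    (hD : D = (C.inf' hC fun x => ∑ y ∈ C.erase x, (hammingDist x y : ℝ)) / ((N : ℝ) - 1))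
    (hα : Real.sqrt 2 * (1 + (t : ℝ) / ((N : ℝ) - 1)) ≤ α)
    (hcond : α * Real.sqrt ((t : ℝ) * Real.log (2 * ((N : ℝ) - (t : ℝ)) / ε))
        ≤ ((w : ℝ) - 1 - (t : ℝ) * ((w : ℝ) - D / 2)) / ((w : ℝ) - (d : ℝ) / 2)) :
    ∃ B : Finset (Finset (Fin M → Bool)),
      (∀ S ∈ B, S ⊆ C ∧ S.card = t) ∧
      (1 - ε) * (N.choose t : ℝ) ≤ (B.card : ℝ) ∧
      ∀ S ∈ B, ∀ ν ∈ C, ν ∉ S → ¬ bsupp ν ⊆ S.biUnion bsupp := by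
  have hN1 : (1 : ℝ) ≤ (N : ℝ) - 1 := by
    have : (2 : ℝ) ≤ N := by exact_mod_cast (by omega : 2 ≤ N)
    linarith
  have hNt : (1 : ℝ) ≤ (N : ℝ) - t := by
    have : (t : ℝ) + 1 ≤ N := by exact_mod_cast (by omega : t + 1 ≤ N)
    linarith
  have ht0 : (1 : ℝ) ≤ t := by exact_mod_cast ht
  have harg : 1 < 2 * ((N : ℝ) - t) / ε := by
    rw [lt_div_iff₀ hε0]; linarith
  set L := Real.log (2 * ((N : ℝ) - t) / ε) with hL
  have hLpos : 0 < L := Real.log_pos harg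
  have hexpL : Real.exp (-L) = ε / (2 * ((N : ℝ) - t)) := by
    rw [Real.exp_neg, hL, Real.exp_log (by linarith), inv_div]
  have hα2 : Real.sqrt 2 ≤ α := by
    refine le_trans ?_ hα
    have : 0 ≤ (t : ℝ) / ((N : ℝ) - 1) := by positivity
    nlinarith [Real.sqrt_nonneg 2]
  have hs2 : 0 < Real.sqrt 2 := Real.sqrt_pos.2 (by norm_num)
  have hstL : 0 < Real.sqrt (t * L) := Real.sqrt_pos.2 (by positivity)
  set f : (Fin M → Bool) → (Fin M → Bool) → ℝ :=
    fun x y => ((bsupp x ∩ bsupp y).card : ℝ) with hf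
  set b : ℝ := (w : ℝ) - (d : ℝ) / 2 with hbdef
  have hfb : ∀ x ∈ C, ∀ y ∈ C, x ≠ y → f x y ≤ b := by
    intro x hx y hy hxy
    have h1 : f x y = w - (hammingDist x y : ℝ) / 2 := overlap_eq x y (hw x hx) (hw y hy)
    have h2 : (d : ℝ) ≤ hammingDist x y := by exact_mod_cast hd x hx y hy hxy
    rw [h1]; linarith
  have hb : 0 < b := by
    obtain ⟨x, hx, y, hy, hxy⟩ := Finset.one_lt_card.1 (by omega : 1 < C.card)
    have h0 : 0 ≤ b := le_trans (Nat.cast_nonneg _) (hfb x hx y hy hxy)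
    rcases h0.lt_or_eq with h | h
    · exact h
    · rw [← h, div_zero] at hcond
      have : 0 < α * Real.sqrt (t * L) := mul_pos (by linarith) hstL
      linarith
  set r : ℝ := Real.sqrt 2 * Real.sqrt (t * L) with hr
  have hr2 : r ^ 2 / (2 * t) = L := by
    rw [hr, mul_pow, Real.sq_sqrt (by norm_num), Real.sq_sqrt (by positivity)]
    field_simp
  have hdev0 : b * r ≤ w - t * ((w : ℝ) - D / 2) := by
    rw [le_div_iff₀ hb] at hcond
    have : r * b ≤ α * Real.sqrt (t * L) * b :=
      mul_le_mul_of_nonneg_right (mul_le_mul_of_nonneg_right hα2 hstL.le) hb.le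
    linarith
  have hbad : ∀ ν ∈ C, ((((C.erase ν).powersetCard t).filter
      fun S => (w : ℝ) ≤ ∑ y ∈ S, f ν y).card : ℝ)
      ≤ (N - 1).choose t * (ε / (2 * ((N : ℝ) - t))) := by
    intro ν hν
    have hcard : (C.erase ν).card = N - 1 := by rw [Finset.card_erase_of_mem hν, hCN]
    have hcardR : ((C.erase ν).card : ℝ) = (N : ℝ) - 1 := by
      rw [hcard, Nat.cast_sub (by omega)]; simp
    have h := tail_bound (C.erase ν) t ht (by omega) (f ν) b r w hb (by positivity)
      (fun y _ => Nat.cast_nonneg _)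
      (fun y hy => hfb ν hν y (Finset.mem_of_mem_erase hy) (Finset.ne_of_mem_erase hy).symm) ?_
    · rwa [hr2, hexpL, hcard] at h
    · refine hdev0.trans ?_
      have h1 : ∑ y ∈ C.erase ν, f ν y
          = ((N : ℝ) - 1) * w - (∑ y ∈ C.erase ν, (hammingDist ν y : ℝ)) / 2 := by
        rw [Finset.sum_congr rfl (fun y hy => overlap_eq ν y (hw ν hν)
          (hw y (Finset.mem_of_mem_erase hy))), Finset.sum_sub_distrib, ← Finset.sum_div]
        simp only [Finset.sum_const, nsmul_eq_mul, hcardR]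
      have h2 : D * ((N : ℝ) - 1) ≤ ∑ y ∈ C.erase ν, (hammingDist ν y : ℝ) := by
        rw [hD, div_mul_cancel₀ _ (by linarith)]
        exact Finset.inf'_le (fun x => ∑ y ∈ C.erase x, (hammingDist x y : ℝ)) hν
      have h3 : (∑ y ∈ C.erase ν, f ν y) / ((C.erase ν).card : ℝ) ≤ w - D / 2 := by
        rw [hcardR, div_le_iff₀ (by linarith), h1]
        linarith
      have := mul_le_mul_of_nonneg_left h3 (by linarith : (0 : ℝ) ≤ t)
      linarith
  classical
  refine ⟨(C.powersetCard t).filter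
    fun S => ∀ ν ∈ C, ν ∉ S → ¬ bsupp ν ⊆ S.biUnion bsupp, ?_, ?_, ?_⟩
  · intro S hS
    exact Finset.mem_powersetCard.1 (Finset.mem_filter.1 hS).1
  · set G := (C.powersetCard t).filter
      fun S => ∀ ν ∈ C, ν ∉ S → ¬ bsupp ν ⊆ S.biUnion bsupp with hG
    have hcov : C.powersetCard t ⊆ G ∪ C.biUnion (fun ν =>
        ((C.erase ν).powersetCard t).filter fun S => (w : ℝ) ≤ ∑ y ∈ S, f ν y) := by
      intro S hS
      rw [Finset.mem_union]
      by_cases hg : S ∈ G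
      · exact Or.inl hg
      right
      rw [hG, Finset.mem_filter] at hg
      push Not at hg
      obtain ⟨ν, hν, hνS, hsub⟩ := hg hS
      obtain ⟨hSC, hSt⟩ := Finset.mem_powersetCard.1 hS
      rw [Finset.mem_biUnion]
      refine ⟨ν, hν, Finset.mem_filter.2 ⟨Finset.mem_powersetCard.2 ⟨?_, hSt⟩, ?_⟩⟩
      · exact Finset.subset_erase.2 ⟨hSC, hνS⟩
      · have h1 : bsupp ν ⊆ S.biUnion (fun y => bsupp ν ∩ bsupp y) := by
          intro i hi
          obtain ⟨y, hy, hiy⟩ := Finset.mem_biUnion.1 (hsub hi)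
          exact Finset.mem_biUnion.2 ⟨y, hy, Finset.mem_inter.2 ⟨hi, hiy⟩⟩
        have h2 := (Finset.card_le_card h1).trans Finset.card_biUnion_le
        rw [hw ν hν] at h2
        simp only [hf]
        exact_mod_cast h2
    have h1 := (Finset.card_le_card hcov).trans ((Finset.card_union_le _ _).trans
      (Nat.add_le_add_left Finset.card_biUnion_le _))
    rw [Finset.card_powersetCard, hCN] at h1
    have h2 : (N.choose t : ℝ) ≤ G.card + ∑ ν ∈ C, ((((C.erase ν).powersetCard t).filter
      fun S => (w : ℝ) ≤ ∑ y ∈ S, f ν y).card : ℝ) := by exact_mod_cast h1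
    have h3 := Finset.sum_le_sum hbad
    rw [Finset.sum_const, hCN, nsmul_eq_mul] at h3
    have h4 : ((N - 1).choose t : ℝ) * N = N.choose t * ((N : ℝ) - t) := by
      have := Nat.choose_mul_succ_eq (N - 1) t
      rw [show N - 1 + 1 = N by omega] at this
      rw [← Nat.cast_sub (by omega)]
      exact_mod_cast this
    have h5 : (N : ℝ) * ((N - 1).choose t * (ε / (2 * ((N : ℝ) - t)))) = N.choose t * (ε / 2) := by
      have hne : (N : ℝ) - t ≠ 0 := by linarith
      calc _ = (((N - 1).choose t : ℝ) * N) * (ε / (2 * ((N : ℝ) - t))) := by ring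
        _ = _ := by rw [h4]; field_simp
    rw [h5] at h3
    have h6 : (0 : ℝ) ≤ N.choose t * ε := by positivity
    linarith
  · intro S hS
    exact (Finset.mem_filter.1 hS).2
end

section
/- Let C ⊆ {0,1}^M be a constant weight binary code of size N ≥ 3, weight w, minimum distance d and average distance D, let 1 ≤ t ≤ N-2 satisfy w - 1 - t(w - D/2) ≥ 0, and let (c_1, …, c_{t+1}) be a uniformly random ordered tuple of t+1 distinct codewords of C. For each i define Z^i = Σ_{j≠i, 1≤j≤t+1} (w - d_H(c_i, c_j)/2). Then Pr(∃ i ∈ {1,…,t+1} : Z^i ≥ w) ≤ 2(t+1)·exp( -(w - 1 - t(w - D/2))² / (2t·(w - d/2)²·(1 + (t-1)/(N-2))²) ). -/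
open scoped Classical

open Finset in
/-- Injective tuples of length `n` with entries in `A`. -/
noncomputable def injT {α : Type*} [Fintype α] (n : ℕ) (A : Finset α) : Finset (Fin n → α) :=
  (Finset.univ : Finset (Fin n → α)).filter fun f => Function.Injective f ∧ ∀ i, f i ∈ A

theorem injT_sum {α : Type*} [Fintype α] [DecidableEq α] (n : ℕ) (A : Finset α) (i : Fin (n + 1))
    (F : (Fin (n + 1) → α) → ℝ) :
    ∑ f ∈ injT (n + 1) A, F f =
      ∑ y ∈ A, ∑ g ∈ injT n (A.erase y), F (i.insertNth (α := fun _ => α) y g) := by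
  rw [Finset.sum_sigma']
  symm
  refine Finset.sum_bij' (fun p _ => i.insertNth (α := fun _ => α) p.1 p.2)
    (fun f _ => ⟨f i, fun j => f (i.succAbove j)⟩) ?_ ?_ ?_ ?_ ?_
  · rintro ⟨y, g⟩ h
    simp only [Finset.mem_sigma, injT, Finset.mem_filter, Finset.mem_univ, true_and,
      Finset.mem_erase] at h ⊢
    obtain ⟨hy, hg, hA⟩ := h
    refine ⟨?_, ?_⟩
    · intro a b hab
      induction a using i.succAboveCases with
      | x =>
        induction b using i.succAboveCases with
        | x => rfl
        | p b => simp at hab; exact absurd hab.symm (hA b).1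
      | p a =>
        induction b using i.succAboveCases with
        | x => simp at hab; exact absurd hab (hA a).1
        | p b => simp at hab; rw [hg hab]
    · intro a
      induction a using i.succAboveCases with
      | x => simpa using hy
      | p a => simpa using (hA a).2
  · intro f h
    simp only [Finset.mem_sigma, injT, Finset.mem_filter, Finset.mem_univ, true_and,
      Finset.mem_erase] at h ⊢
    refine ⟨h.2 i, ?_, fun j => ⟨?_, h.2 _⟩⟩
    · intro a b hab
      exact Fin.succAbove_right_injective (h.1 hab)
    · intro hj
      exact Fin.succAbove_ne i j (h.1 hj)
  · rintro ⟨y, g⟩ h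
    simp
  · intro f h
    ext a : 1
    induction a using i.succAboveCases with
    | x => simp
    | p a => simp
  · rintro ⟨y, g⟩ h
    rfl

theorem injT_card {α : Type*} [Fintype α] (n : ℕ) (A : Finset α) :
    ((injT n A).card : ℝ) = (A.card.descFactorial n : ℝ) := by
  induction n generalizing A with
  | zero => simp [injT, Function.Injective]
  | succ n ih =>
    have h := injT_sum n A 0 (fun _ => 1)
    simp only [Finset.sum_const, nsmul_eq_mul, mul_one] at h
    rw [h]
    rw [Finset.sum_congr rfl (g := fun _ => ((A.card - 1).descFactorial n : ℝ))]
    · rcases Nat.eq_zero_or_pos A.card with h0 | h0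
      · simp [h0]
      · obtain ⟨m, hm⟩ := Nat.exists_eq_succ_of_ne_zero h0.ne'
        rw [hm, Nat.succ_eq_add_one, Nat.succ_descFactorial_succ]
        simp [-Nat.descFactorial_succ, hm]
    · intro y hy
      rw [ih, Finset.card_erase_of_mem hy]

theorem exp_le_cosh_add {B x : ℝ} (hB : 0 < B) (h1 : -B ≤ x) (h2 : x ≤ B) :
    Real.exp x ≤ Real.cosh B + x / B * Real.sinh B := by
  have ha : 0 ≤ (B + x) / (2 * B) := by apply div_nonneg <;> linarith
  have hb : 0 ≤ (B - x) / (2 * B) := by apply div_nonneg <;> linarith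
  have hab : (B + x) / (2 * B) + (B - x) / (2 * B) = 1 := by field_simp; ring
  have h := convexOn_exp.2 (Set.mem_univ B) (Set.mem_univ (-B)) ha hb hab
  simp only [smul_eq_mul] at h
  have e : (B + x) / (2 * B) * B + (B - x) / (2 * B) * -B = x := by field_simp; ring
  rw [e] at h
  refine h.trans (le_of_eq ?_)
  rw [Real.cosh_eq, Real.sinh_eq]
  field_simp
  ring

theorem hoeff {α : Type*} (A : Finset α) (b : α → ℝ) {B : ℝ} (hB : 0 < B)
    (h1 : ∀ y ∈ A, -B ≤ b y) (h2 : ∀ y ∈ A, b y ≤ B) (h0 : ∑ y ∈ A, b y = 0) :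
    ∑ y ∈ A, Real.exp (b y) ≤ A.card * Real.exp (B ^ 2 / 2) := by
  calc ∑ y ∈ A, Real.exp (b y) ≤ ∑ y ∈ A, (Real.cosh B + b y / B * Real.sinh B) :=
        Finset.sum_le_sum fun y hy => exp_le_cosh_add hB (h1 y hy) (h2 y hy)
    _ = A.card * Real.cosh B := by
        rw [Finset.sum_add_distrib, ← Finset.sum_mul, ← Finset.sum_div, h0]; simp
    _ ≤ _ := by
        gcongr
        exact Real.cosh_le_exp_half_sq B

theorem mgf_bound {α : Type*} [Fintype α] [DecidableEq α] (t : ℕ) (A : Finset α) (a : α → ℝ) {B : ℝ}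
    (hB : 0 < B) (h1 : ∀ y ∈ A, 0 ≤ a y) (h2 : ∀ y ∈ A, a y ≤ B) :
    ∑ g ∈ injT t A, Real.exp (∑ j, a (g j)) ≤
      (A.card.descFactorial t : ℝ) *
        Real.exp (t * ((∑ y ∈ A, a y) / A.card) + t * (B ^ 2 / 2)) := by
  induction t generalizing A with
  | zero =>
    have := injT_card 0 A
    simp at this ⊢
    simp [this]
  | succ t ih =>
    rw [injT_sum t A 0]
    rcases Nat.eq_zero_or_pos A.card with h0 | h0
    · rw [Finset.card_eq_zero] at h0
      simp [h0]
    obtain ⟨m, hm⟩ := Nat.exists_eq_succ_of_ne_zero h0.ne'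
    set μ := (∑ y ∈ A, a y) / A.card with hμ
    have hsum : ∑ y ∈ A, a y = (m + 1) * μ := by
      rw [hμ, hm]; push_cast; field_simp
    have hμ0 : 0 ≤ μ := div_nonneg (Finset.sum_nonneg h1) (Nat.cast_nonneg _)
    have hμB : μ ≤ B := by
      rw [hμ, div_le_iff₀ (by exact_mod_cast h0)]
      calc _ ≤ ∑ y ∈ A, B := Finset.sum_le_sum h2
        _ = _ := by simp [mul_comm]
    have step : ∀ y ∈ A, ∑ g ∈ injT t (A.erase y),
        Real.exp (∑ j, a ((0 : Fin (t + 1)).insertNth (α := fun _ => α) y g j)) ≤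
        Real.exp (a y) * ((m.descFactorial t : ℝ) *
          Real.exp (t * (((m + 1) * μ - a y) / m) + t * (B ^ 2 / 2))) := by
      intro y hy
      have := ih (A.erase y) (fun z hz => h1 z (Finset.mem_of_mem_erase hz))
        (fun z hz => h2 z (Finset.mem_of_mem_erase hz))
      rw [Finset.card_erase_of_mem hy, hm, Finset.sum_erase_eq_sub hy, hsum] at this
      simp only [Nat.succ_eq_add_one, Nat.add_sub_cancel] at this
      refine le_trans (le_of_eq ?_) (mul_le_mul_of_nonneg_left this (Real.exp_pos _).le)
      rw [Finset.mul_sum]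
      refine Finset.sum_congr rfl fun g _ => ?_
      rw [← Real.exp_add, Fin.sum_univ_succ]
      simp
    refine (Finset.sum_le_sum step).trans ?_
    rw [hm, Nat.succ_eq_add_one, Nat.succ_descFactorial_succ]
    rcases lt_or_ge m t with hmt | hmt
    · simp [Nat.descFactorial_eq_zero_iff_lt.2 hmt]
    set κ : ℝ := 1 - t / m with hκ
    have hκ0 : 0 ≤ κ := by
      have : (t : ℝ) / m ≤ 1 := div_le_one_of_le₀ (by exact_mod_cast hmt) (by positivity)
      linarith
    have hκ1 : κ ≤ 1 := by
      have : 0 ≤ (t : ℝ) / m := by positivity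
      linarith
    have key : ∀ y, Real.exp (a y) * ((m.descFactorial t : ℝ) *
          Real.exp (t * (((m + 1) * μ - a y) / m) + t * (B ^ 2 / 2))) =
        Real.exp (κ * (a y - μ)) * ((m.descFactorial t : ℝ) *
          Real.exp ((t + 1) * μ + t * (B ^ 2 / 2))) := by
      intro y
      rw [mul_left_comm, ← Real.exp_add, mul_left_comm (Real.exp (κ * _)), ← Real.exp_add]
      congr 2
      rw [hκ]
      rcases Nat.eq_zero_or_pos m with hm0 | hm0
      · have : t = 0 := by omega
        subst this
        simp
      · have : (m : ℝ) ≠ 0 := by positivity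
        field_simp
        ring
    simp_rw [key]
    rw [← Finset.sum_mul]
    have hh := hoeff A (fun y => κ * (a y - μ)) hB
      (fun y hy => by nlinarith [h1 y hy, h2 y hy]) (fun y hy => by nlinarith [h1 y hy, h2 y hy])
      (by rw [← Finset.mul_sum, Finset.sum_sub_distrib, hsum]; simp [hm])
    refine (mul_le_mul_of_nonneg_right hh (by positivity)).trans (le_of_eq ?_)
    have e : Real.exp (((t + 1 : ℕ) : ℝ) * μ + ((t + 1 : ℕ) : ℝ) * (B ^ 2 / 2)) =
        Real.exp (B ^ 2 / 2) * Real.exp ((t + 1) * μ + t * (B ^ 2 / 2)) := by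
      rw [← Real.exp_add]; congr 1; push_cast; ring
    rw [e, hm]
    push_cast
    ring

theorem chernoff_exponent {s L t B : ℝ} (hB : 0 < B) (ht : 0 < t) (hs : s = L / (t * B ^ 2)) :
    -(s * L) + t * ((s * B) ^ 2 / 2) = -(L ^ 2 / (2 * t * B ^ 2)) := by
  subst hs
  field_simp
  ring

theorem hammingDist_le_bsupp {M : ℕ} (x y : Fin M → Bool) :
    hammingDist x y ≤ (bsupp x).card + (bsupp y).card := by
  refine le_trans (Finset.card_le_card ?_) (Finset.card_union_le _ _)
  intro i hi
  simp only [bsupp, Finset.mem_filter, Finset.mem_union, Finset.mem_univ, true_and] at hi ⊢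
  cases hx : x i <;> cases hy : y i <;> simp_all

/-- Azuma-type bound: for a uniformly random ordered tuple `(c_1, …, c_{t+1})` of `t+1`
distinct codewords of a constant weight code `C` of size `N ≥ 3`, weight `w`, minimum distance
at least `d` and average distance `D`, with `Z^i = Σ_{j≠i} (w - d_H(c_i,c_j)/2)` and
`w - 1 - t(w - D/2) ≥ 0`, the probability that some `Z^i ≥ w` is at most
`2(t+1)·exp(-(w-1-t(w-D/2))² / (2t(w-d/2)²(1+(t-1)/(N-2))²))`. -/
theorem stmt_7 (M N w d t : ℕ) (D : ℝ) (hN : 3 ≤ N) (ht : 1 ≤ t) (htN : t + 2 ≤ N)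
    (C : Finset (Fin M → Bool)) (hCN : C.card = N) (hC : C.Nonempty)
    (hw : ∀ x ∈ C, (bsupp x).card = w)
    (hd : ∀ x ∈ C, ∀ y ∈ C, x ≠ y → d ≤ hammingDist x y)
    (hD : D = (C.inf' hC fun x => ∑ y ∈ C.erase x, (hammingDist x y : ℝ)) / ((N : ℝ) - 1))
    (hwtD : 0 ≤ (w : ℝ) - 1 - (t : ℝ) * ((w : ℝ) - D / 2)) :
    let T := (Finset.univ : Finset (Fin (t + 1) → Fin M → Bool)).filter
      fun f => Function.Injective f ∧ ∀ i, f i ∈ C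
    let bad := T.filter fun f => ∃ i : Fin (t + 1),
      (w : ℝ) ≤ ∑ j ∈ Finset.univ.erase i, ((w : ℝ) - (hammingDist (f i) (f j) : ℝ) / 2)
    (bad.card : ℝ) / (T.card : ℝ) ≤
      2 * ((t : ℝ) + 1) *
        Real.exp (-(((w : ℝ) - 1 - (t : ℝ) * ((w : ℝ) - D / 2)) ^ 2 /
          (2 * (t : ℝ) * ((w : ℝ) - (d : ℝ) / 2) ^ 2 *
            (1 + ((t : ℝ) - 1) / ((N : ℝ) - 2)) ^ 2))) := by
  intro T bad
  have hTdef : T = injT (t + 1) C := by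
    ext f; simp [T, injT]
  have hTcard : (T.card : ℝ) = (N.descFactorial (t + 1) : ℝ) := by
    rw [hTdef, injT_card, hCN]
  have hTpos : 0 < (T.card : ℝ) := by
    rw [hTcard]
    exact_mod_cast Nat.descFactorial_pos.2 (by omega)
  set B : ℝ := (w : ℝ) - (d : ℝ) / 2 with hBdef
  set L : ℝ := (w : ℝ) - 1 - (t : ℝ) * ((w : ℝ) - D / 2) with hL
  set R : ℝ := 1 + ((t : ℝ) - 1) / ((N : ℝ) - 2) with hR
  have ht' : (1 : ℝ) ≤ t := by exact_mod_cast ht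
  have hN' : (3 : ℝ) ≤ N := by exact_mod_cast hN
  have hR1 : 1 ≤ R := by
    have : 0 ≤ ((t : ℝ) - 1) / ((N : ℝ) - 2) := div_nonneg (by linarith) (by linarith)
    linarith
  have hdist : ∀ x ∈ C, ∀ y ∈ C, (hammingDist x y : ℝ) ≤ 2 * w := by
    intro x hx y hy
    have := hammingDist_le_bsupp x y
    rw [hw x hx, hw y hy] at this
    have h2 : hammingDist x y ≤ 2 * w := by omega
    exact_mod_cast h2
  have hB0 : 0 ≤ B := by
    obtain ⟨x, hx, y, hy, hxy⟩ := Finset.one_lt_card.1 (show 1 < C.card by omega)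
    have h1 := hdist x hx y hy
    have h2 : (d : ℝ) ≤ hammingDist x y := by exact_mod_cast hd x hx y hy hxy
    rw [hBdef]; linarith
  rcases hB0.eq_or_lt with hB | hB
  · have h1 : (bad.card : ℝ) / T.card ≤ 1 := by
      apply div_le_one_of_le₀ _ hTpos.le
      exact_mod_cast Finset.card_le_card (Finset.filter_subset _ _)
    rw [← hB]
    simp
    linarith
  rcases hwtD.eq_or_lt with hL0 | hL0
  · have h1 : (bad.card : ℝ) / T.card ≤ 1 := by
      apply div_le_one_of_le₀ _ hTpos.le
      exact_mod_cast Finset.card_le_card (Finset.filter_subset _ _)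
    rw [← hL0]
    simp
    linarith
  set s : ℝ := L / (t * B ^ 2) with hs
  have hspos : 0 < s := by positivity
  clear_value s L B R
  -- the bound for one index
  have one : ∀ i : Fin (t + 1), ((T.filter fun f =>
      (w : ℝ) ≤ ∑ j ∈ Finset.univ.erase i,
        ((w : ℝ) - (hammingDist (f i) (f j) : ℝ) / 2)).card : ℝ) ≤
      T.card * Real.exp (-(L ^ 2 / (2 * t * B ^ 2))) := by
    intro i
    have hcard : ((T.filter fun f =>
      (w : ℝ) ≤ ∑ j ∈ Finset.univ.erase i,
        ((w : ℝ) - (hammingDist (f i) (f j) : ℝ) / 2)).card : ℝ) ≤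
        ∑ f ∈ injT (t + 1) C, Real.exp (s * (∑ j ∈ Finset.univ.erase i,
        ((w : ℝ) - (hammingDist (f i) (f j) : ℝ) / 2) - w)) := by
      rw [Finset.card_filter, hTdef]
      push_cast
      refine Finset.sum_le_sum fun f _ => ?_
      split_ifs with h
      · rw [Real.one_le_exp_iff]
        exact mul_nonneg hspos.le (by linarith)
      · positivity
    refine hcard.trans ?_
    rw [injT_sum t C i]
    have each : ∀ x ∈ C, ∑ g ∈ injT t (C.erase x),
        Real.exp (s * (∑ j ∈ Finset.univ.erase i,
        ((w : ℝ) - (hammingDist (i.insertNth (α := fun _ => Fin M → Bool) x g i)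
          (i.insertNth (α := fun _ => Fin M → Bool) x g j) : ℝ) / 2) - w)) ≤
        ((N - 1).descFactorial t : ℝ) * Real.exp (-(L ^ 2 / (2 * t * B ^ 2))) := by
      intro x hx
      have hm := mgf_bound t (C.erase x)
        (fun y => s * ((w : ℝ) - (hammingDist x y : ℝ) / 2)) (B := s * B) (by positivity)
        (fun y hy => mul_nonneg hspos.le
          (by linarith [hdist x hx y (Finset.mem_of_mem_erase hy)]))
        (fun y hy => mul_le_mul_of_nonneg_left (by
          have h2 : (d : ℝ) ≤ hammingDist x y := by
            exact_mod_cast hd x hx y (Finset.mem_of_mem_erase hy) (Finset.ne_of_mem_erase hy).symm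
          rw [hBdef]; linarith) hspos.le)
      have hce : (C.erase x).card = N - 1 := by rw [Finset.card_erase_of_mem hx, hCN]
      have hce' : (((N - 1 : ℕ)) : ℝ) = (N : ℝ) - 1 := by
        rw [Nat.cast_sub (by omega)]; simp
      rw [hce, hce'] at hm
      have hmean : (∑ y ∈ C.erase x, s * ((w : ℝ) - (hammingDist x y : ℝ) / 2)) / ((N : ℝ) - 1)
          ≤ s * ((w : ℝ) - D / 2) := by
        have hDle : D * ((N : ℝ) - 1) ≤ ∑ y ∈ C.erase x, (hammingDist x y : ℝ) := by
          rw [hD, div_mul_cancel₀ _ (by linarith : (N : ℝ) - 1 ≠ 0)]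
          exact Finset.inf'_le (fun x => ∑ y ∈ C.erase x, (hammingDist x y : ℝ)) hx
        rw [div_le_iff₀ (by linarith), ← Finset.mul_sum, Finset.sum_sub_distrib,
          ← Finset.sum_div, Finset.sum_const, hce, nsmul_eq_mul, hce', mul_assoc]
        refine mul_le_mul_of_nonneg_left ?_ hspos.le
        linarith
      calc _ = Real.exp (-(s * w)) * ∑ g ∈ injT t (C.erase x),
            Real.exp (∑ j, s * ((w : ℝ) - (hammingDist x (g j) : ℝ) / 2)) := by
            rw [Finset.mul_sum]
            refine Finset.sum_congr rfl fun g _ => ?_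
            rw [← Real.exp_add, Finset.sum_erase_eq_sub (Finset.mem_univ i),
              Fin.sum_univ_succAbove _ i, ← Finset.mul_sum]
            simp only [Fin.insertNth_apply_same, Fin.insertNth_apply_succAbove]
            congr 1
            ring
        _ ≤ Real.exp (-(s * w)) * (((N - 1).descFactorial t : ℝ) *
            Real.exp (t * (s * ((w : ℝ) - D / 2)) + t * ((s * B) ^ 2 / 2))) := by
            refine mul_le_mul_of_nonneg_left (hm.trans ?_) (Real.exp_pos _).le
            gcongr
        _ = ((N - 1).descFactorial t : ℝ) * Real.exp (-(s * w) +
            (t * (s * ((w : ℝ) - D / 2)) + t * ((s * B) ^ 2 / 2))) := by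
            rw [Real.exp_add (-(s * w))]; ring
        _ ≤ _ := by
            gcongr
            have e1 : -(s * w) + (t * (s * ((w : ℝ) - D / 2)) + t * ((s * B) ^ 2 / 2)) =
              -(s * L) - s + t * ((s * B) ^ 2 / 2) := by rw [hL]; ring
            have e2 : -(s * L) + t * ((s * B) ^ 2 / 2) = -(L ^ 2 / (2 * t * B ^ 2)) := by
              exact chernoff_exponent hB (by linarith) hs
            linarith only [e1, e2, hspos]
    refine (Finset.sum_le_sum each).trans (le_of_eq ?_)
    rw [Finset.sum_const, hCN, nsmul_eq_mul, hTcard]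
    obtain ⟨m, rfl⟩ : ∃ m, N = m + 1 := ⟨N - 1, by omega⟩
    rw [Nat.succ_descFactorial_succ]
    push_cast
    ring
  have hbad : (bad.card : ℝ) ≤ ((t : ℝ) + 1) * (T.card * Real.exp (-(L ^ 2 / (2 * t * B ^ 2)))) := by
    have hsub : bad ⊆ Finset.univ.biUnion fun i : Fin (t + 1) => T.filter fun f =>
        (w : ℝ) ≤ ∑ j ∈ Finset.univ.erase i,
        ((w : ℝ) - (hammingDist (f i) (f j) : ℝ) / 2) := by
      intro f hf
      obtain ⟨hfT, i, hi⟩ := Finset.mem_filter.1 hf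
      exact Finset.mem_biUnion.2 ⟨i, Finset.mem_univ _, Finset.mem_filter.2 ⟨hfT, hi⟩⟩
    have h1 := (Finset.card_le_card hsub).trans Finset.card_biUnion_le
    have h2 : (bad.card : ℝ) ≤ ∑ i : Fin (t + 1), ((T.filter fun f =>
        (w : ℝ) ≤ ∑ j ∈ Finset.univ.erase i,
        ((w : ℝ) - (hammingDist (f i) (f j) : ℝ) / 2)).card : ℝ) := by exact_mod_cast h1
    refine h2.trans ((Finset.sum_le_sum fun i _ => one i).trans (le_of_eq ?_))
    simp
  rw [div_le_iff₀ hTpos]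
  have hexp : Real.exp (-(L ^ 2 / (2 * t * B ^ 2))) ≤
      Real.exp (-(L ^ 2 / (2 * t * B ^ 2 * R ^ 2))) := by
    apply Real.exp_le_exp.2
    apply neg_le_neg
    apply div_le_div_of_nonneg_left (by positivity) (by positivity)
    exact le_mul_of_one_le_right (by positivity) (one_le_pow₀ hR1)
  set E2 := Real.exp (-(L ^ 2 / (2 * t * B ^ 2 * R ^ 2)))
  have hE2 : 0 < E2 := Real.exp_pos _
  calc (bad.card : ℝ) ≤ _ := hbad
    _ ≤ ((t : ℝ) + 1) * (T.card * E2) := by gcongr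
    _ ≤ 2 * (t + 1) * E2 * T.card := by
      have : 0 ≤ ((t : ℝ) + 1) * (T.card * E2) := by positivity
      linarith
end

section
/- Let q be a prime power, let 2 ≤ k < q, and let C' ⊆ F_q^{q-1} be the Reed-Solomon code of dimension k obtained by evaluating all polynomials over F_q of degree less than k at the q-1 nonzero field elements (so C' has size N = q^k and minimum distance q - k). Let C ⊆ {0,1}^{q(q-1)} be the binary constant weight code obtained from C' by replacing each q-ary symbol by its length-q unit-weight indicator vector. Then the q(q-1) × q^k binary matrix whose columns are the codewords of C is t-disjunct for t = ⌊(q-2)/(k-1)⌋. -/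
/-- The Kautz–Singleton construction: concatenating the Reed–Solomon code of dimension `k`
(polynomials of degree `< k` over a finite field `F` with `q` elements, `2 ≤ k < q`, evaluated
at the `q-1` nonzero field elements) with the unit-weight indicator map yields a binary
constant weight code whose codeword matrix is `t`-disjunct for `t = ⌊(q-2)/(k-1)⌋`: the
support of the binary codeword of a polynomial `p` of degree `< k` is never contained in the
union of the supports of the binary codewords of at most `⌊(q-2)/(k-1)⌋` other polynomials of
degree `< k`. -/
theorem stmt_17 (q k : ℕ) (F : Type) [Field F] [Fintype F] [DecidableEq F]
    (hq : Fintype.card F = q) (hk2 : 2 ≤ k) (hkq : k < q) :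
    let cw : Polynomial F → ({a : F // a ≠ 0} × F → Bool) :=
      fun p z => decide (Polynomial.eval (z.1 : F) p = z.2)
    let suppB : ({a : F // a ≠ 0} × F → Bool) → Finset ({a : F // a ≠ 0} × F) :=
      fun g => Finset.univ.filter fun z => g z = true
    ∀ p : Polynomial F, p.degree < (k : ℕ) →
      ∀ S : Finset (Polynomial F), (∀ p' ∈ S, p'.degree < (k : ℕ)) →
        p ∉ S → S.card ≤ (q - 2) / (k - 1) →
        ¬ suppB (cw p) ⊆ S.biUnion fun p' => suppB (cw p') := by
  intro cw suppB p hp S hS hpS hcard hsub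
  have hcover : (Finset.univ.erase (0 : F)) ⊆ S.biUnion fun p' => (p - p').roots.toFinset := by
    intro a ha
    have ha0 : a ≠ 0 := (Finset.mem_erase.mp ha).1
    have h1 : ((⟨a, ha0⟩, Polynomial.eval a p) : {a : F // a ≠ 0} × F) ∈ suppB (cw p) := by
      simp [suppB, cw]
    obtain ⟨p', hp', h2⟩ := Finset.mem_biUnion.mp (hsub h1)
    have h3 : Polynomial.eval a p' = Polynomial.eval a p := by
      simpa [suppB, cw] using h2
    refine Finset.mem_biUnion.mpr ⟨p', hp', ?_⟩
    have hne : p - p' ≠ 0 := by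
      intro h
      rw [sub_eq_zero] at h
      exact hpS (h ▸ hp')
    rw [Multiset.mem_toFinset, Polynomial.mem_roots hne]
    simp [Polynomial.IsRoot, h3]
  have hbound : (S.biUnion fun p' => (p - p').roots.toFinset).card ≤ S.card * (k - 1) := by
    apply Finset.card_biUnion_le_card_mul
    intro p' hp'
    have hne : p - p' ≠ 0 := by
      intro h
      rw [sub_eq_zero] at h
      exact hpS (h ▸ hp')
    have hdeg : (p - p').degree < (k : ℕ) :=
      lt_of_le_of_lt (Polynomial.degree_sub_le p p') (max_lt hp (hS p' hp'))
    have hnat : (p - p').natDegree < k := (Polynomial.natDegree_lt_iff_degree_lt hne).mpr hdeg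
    have h4 := Multiset.toFinset_card_le (p - p').roots
    have h5 := Polynomial.card_roots' (p - p')
    omega
  have h6 := Finset.card_le_card hcover
  rw [Finset.card_erase_of_mem (Finset.mem_univ _), Finset.card_univ, hq] at h6
  have h7 : S.card * (k - 1) ≤ (q - 2) / (k - 1) * (k - 1) := Nat.mul_le_mul_right _ hcard
  have h8 := Nat.div_mul_le_self (q - 2) (k - 1)
  omega
end

section
/- For every constant a > 1 there exist a constant C > 0 and an integer t_0 such that for all integers t ≥ t_0, all N > t, and all ε with 2(t+1)·e^{-at} < ε < 1, there exists an M×N binary matrix that is type-2 (t,ε)-disjunct with M ≤ C · t^{3/2} · ln N · √(ln(2(t+1)/ε)) / (ln t − ln ln(2(t+1)/ε) + ln(4a)). -/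
/-- Number of rows isolating `j` within `S`. -/
lemma aux_good (t N : ℕ) (S : Finset (Fin N)) (hS : S.card = t + 1) (j : Fin N) (hj : j ∈ S) :
    (((Finset.univ : Finset (Fin N → Fin (t + 1))).filter fun f =>
      f j = 0 ∧ ∀ j' ∈ S, j' ≠ j → f j' ≠ 0).card) = t ^ t * (t + 1) ^ (N - (t + 1)) := by
  classical
  have h1 : ((Finset.univ : Finset (Fin N → Fin (t + 1))).filter fun f =>
      f j = 0 ∧ ∀ j' ∈ S, j' ≠ j → f j' ≠ 0) =
      Fintype.piFinset (fun i : Fin N => if i = j then ({0} : Finset (Fin (t + 1)))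
        else if i ∈ S then Finset.univ.erase 0 else Finset.univ) := by
    ext f
    simp only [Finset.mem_filter, Finset.mem_univ, true_and, Fintype.mem_piFinset]
    constructor
    · rintro ⟨h0, h⟩ i
      by_cases hi : i = j
      · subst hi; simp [h0]
      · by_cases hiS : i ∈ S
        · simp [hi, hiS, h i hiS hi]
        · simp [hi, hiS]
    · intro h
      refine ⟨by simpa using h j, fun i hiS hi => ?_⟩
      have := h i
      simpa [hi, hiS] using this
  rw [h1, Fintype.card_piFinset]
  have h2 : ∀ i : Fin N, (if i = j then ({0} : Finset (Fin (t + 1)))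
        else if i ∈ S then Finset.univ.erase 0 else Finset.univ).card =
        if i = j then 1 else if i ∈ S then t else t + 1 := by
    intro i
    split_ifs <;> simp
  simp only [h2]
  rw [← Finset.prod_mul_prod_compl S, ← Finset.mul_prod_erase S _ hj]
  have h3 : ∏ x ∈ S.erase j, (if x = j then 1 else if x ∈ S then t else t + 1) = t ^ t := by
    rw [Finset.prod_congr rfl (g := fun _ => t)]
    · rw [Finset.prod_const, Finset.card_erase_of_mem hj, hS]; simp
    · intro x hx
      rw [Finset.mem_erase] at hx
      simp [hx.1, hx.2]
  have h4 : ∏ x ∈ Sᶜ, (if x = j then 1 else if x ∈ S then t else t + 1) =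
      (t + 1) ^ (N - (t + 1)) := by
    rw [Finset.prod_congr rfl (g := fun _ => t + 1)]
    · rw [Finset.prod_const, Finset.card_compl, hS]; simp
    · intro x hx
      rw [Finset.mem_compl] at hx
      have : x ≠ j := fun h => hx (h ▸ hj)
      simp [hx, this]
  rw [h3, h4]
  simp

lemma aux_p (t : ℕ) (ht : 1 ≤ t) : ((t : ℝ) + 1) ^ t ≤ 4 * (t : ℝ) ^ t := by
  have ht0 : (0 : ℝ) < t := by exact_mod_cast ht
  have h1 : (1 + 1 / (t : ℝ)) ^ t ≤ 4 := by
    have h := Real.add_one_le_exp (1 / (t : ℝ))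
    calc (1 + 1 / (t : ℝ)) ^ t ≤ (Real.exp (1 / t)) ^ t := by
          apply pow_le_pow_left₀ (by positivity); linarith
      _ = Real.exp 1 := by
          rw [← Real.exp_nat_mul]; congr 1; field_simp
      _ ≤ 4 := by linarith [Real.exp_one_lt_d9]
  have h2 : ((t : ℝ) + 1) = t * (1 + 1 / t) := by field_simp
  rw [h2, mul_pow]
  nlinarith [pow_pos ht0 t]

/-- Bad rows bound. -/
lemma aux_bad (t N : ℕ) (ht : 1 ≤ t) (hN : t < N) (S : Finset (Fin N)) (hS : S.card = t + 1)
    (j : Fin N) (hj : j ∈ S) :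
    ((((Finset.univ : Finset (Fin N → Fin (t + 1))).filter fun f =>
      ¬ (f j = 0 ∧ ∀ j' ∈ S, j' ≠ j → f j' ≠ 0)).card : ℝ)) ≤
      ((t : ℝ) + 1) ^ N * Real.exp (- (1 / (4 * ((t : ℝ) + 1)))) := by
  have h1 := aux_good t N S hS j hj
  have h2 := Finset.card_filter_add_card_filter_not (s := (Finset.univ : Finset (Fin N → Fin (t + 1))))
    (fun f => f j = 0 ∧ ∀ j' ∈ S, j' ≠ j → f j' ≠ 0)
  rw [h1] at h2
  have h3 : (Finset.univ : Finset (Fin N → Fin (t + 1))).card = (t + 1) ^ N := by simp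
  rw [h3] at h2
  have h4 : (t : ℝ) ^ t * ((t : ℝ) + 1) ^ (N - (t + 1)) +
    ((((Finset.univ : Finset (Fin N → Fin (t + 1))).filter fun f =>
      ¬ (f j = 0 ∧ ∀ j' ∈ S, j' ≠ j → f j' ≠ 0)).card : ℝ)) = ((t : ℝ) + 1) ^ N := by
    exact_mod_cast h2
  have h5 : ((t : ℝ) + 1) ^ N = ((t : ℝ) + 1) ^ t * ((t : ℝ) + 1) * ((t : ℝ) + 1) ^ (N - (t + 1)) := by
    rw [← pow_succ, ← pow_add]; congr 1; omega
  have h6 := aux_p t ht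
  have hpos : (0 : ℝ) < (t : ℝ) + 1 := by positivity
  have h7 : ((t : ℝ) + 1) ^ N * (1 / (4 * ((t : ℝ) + 1))) ≤
      (t : ℝ) ^ t * ((t : ℝ) + 1) ^ (N - (t + 1)) := by
    have : ((t : ℝ) + 1) ^ N * (1 / (4 * ((t : ℝ) + 1))) =
      (((t : ℝ) + 1) ^ t / 4) * ((t : ℝ) + 1) ^ (N - (t + 1)) := by
      rw [h5]; field_simp
    rw [this]
    apply mul_le_mul_of_nonneg_right _ (by positivity)
    linarith
  have h8 := Real.add_one_le_exp (- (1 / (4 * ((t : ℝ) + 1))))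
  have h9 : (0 : ℝ) < ((t : ℝ) + 1) ^ N := by positivity
  have h10 := mul_le_mul_of_nonneg_left h8 h9.le
  linarith

lemma aux_exists (t N M : ℕ) (ht : 1 ≤ t) (hN : t < N) (ε : ℝ)
    (hM : ((t : ℝ) + 1) * Real.exp (- (M / (4 * ((t : ℝ) + 1)))) ≤ ε) :
    ∃ A : Fin M → Fin N → Bool,
          ((1 - ε) * (N.choose (t + 1) : ℝ) ≤
            ((((Finset.univ : Finset (Fin N)).powersetCard (t + 1)).filter fun S =>
              ∀ j ∈ S, ∃ r : Fin M, A r j = true ∧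
                ∀ j' ∈ S, j' ≠ j → A r j' = false).card : ℝ)) := by
  classical
  let P : (Fin M → Fin N → Fin (t + 1)) → Finset (Fin N) → Fin N → Prop := fun F S j =>
    ∀ r, ¬ (F r j = 0 ∧ ∀ j' ∈ S, j' ≠ j → F r j' ≠ 0)
  let PS := (Finset.univ : Finset (Fin N)).powersetCard (t + 1)
  have hPS : (PS.card : ℝ) = (N.choose (t + 1) : ℝ) := by simp [PS]
  -- number of bad matrices for a pair
  have key : ∀ S ∈ PS, ∀ j ∈ S,
      (((Finset.univ : Finset (Fin M → Fin N → Fin (t + 1))).filter fun F => P F S j).card : ℝ) ≤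
      (((t : ℝ) + 1) ^ N) ^ M * Real.exp (- (M / (4 * ((t : ℝ) + 1)))) := by
    intro S hS j hj
    have hc : S.card = t + 1 := (Finset.mem_powersetCard.1 hS).2
    have h1 : ((Finset.univ : Finset (Fin M → Fin N → Fin (t + 1))).filter fun F => P F S j) =
      Fintype.piFinset (fun _ : Fin M => (Finset.univ : Finset (Fin N → Fin (t + 1))).filter fun f =>
      ¬ (f j = 0 ∧ ∀ j' ∈ S, j' ≠ j → f j' ≠ 0)) := by
      ext F
      simp only [Finset.mem_filter, Finset.mem_univ, true_and, Fintype.mem_piFinset, P]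
    rw [h1, Fintype.card_piFinset, Finset.prod_const, Finset.card_univ, Fintype.card_fin, Nat.cast_pow]
    refine (pow_le_pow_left₀ (by positivity) (aux_bad t N ht hN S hc j hj) M).trans (le_of_eq ?_)
    rw [mul_pow, ← Real.exp_nat_mul]
    congr 2
    ring
  let w : (Fin M → Fin N → Fin (t + 1)) → ℝ := fun F =>
    ∑ S ∈ PS, ∑ j ∈ S, if P F S j then (1 : ℝ) else 0
  have hsum : ∑ F, w F ≤ ∑ _F : (Fin M → Fin N → Fin (t + 1)), ε * (N.choose (t + 1) : ℝ) := by
    have e1 : ∑ F, w F = ∑ S ∈ PS, ∑ j ∈ S,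
        (((Finset.univ : Finset (Fin M → Fin N → Fin (t + 1))).filter fun F => P F S j).card : ℝ) := by
      simp only [w]
      rw [Finset.sum_comm]
      refine Finset.sum_congr rfl fun S _ => ?_
      rw [Finset.sum_comm]
      refine Finset.sum_congr rfl fun j _ => ?_
      rw [Finset.sum_boole]
    rw [e1]
    calc _ ≤ ∑ S ∈ PS, ∑ _j ∈ S,
          (((t : ℝ) + 1) ^ N) ^ M * Real.exp (- (M / (4 * ((t : ℝ) + 1)))) :=
          Finset.sum_le_sum fun S hS => Finset.sum_le_sum fun j hj => key S hS j hj
      _ = ∑ S ∈ PS, ((t : ℝ) + 1) *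
          ((((t : ℝ) + 1) ^ N) ^ M * Real.exp (- (M / (4 * ((t : ℝ) + 1))))) := by
          refine Finset.sum_congr rfl fun S hS => ?_
          rw [Finset.sum_const, (Finset.mem_powersetCard.1 hS).2, nsmul_eq_mul]
          push_cast; rfl
      _ = (N.choose (t + 1) : ℝ) * (((t : ℝ) + 1) ^ N) ^ M *
          (((t : ℝ) + 1) * Real.exp (- (M / (4 * ((t : ℝ) + 1))))) := by
          rw [Finset.sum_const, nsmul_eq_mul, hPS]; ring
      _ ≤ (N.choose (t + 1) : ℝ) * (((t : ℝ) + 1) ^ N) ^ M * ε :=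
          mul_le_mul_of_nonneg_left hM (by positivity)
      _ = _ := by
          rw [Finset.sum_const, nsmul_eq_mul, Finset.card_univ]
          simp only [Fintype.card_pi, Fintype.card_fin, Finset.prod_const, Finset.card_univ]
          push_cast; ring
  obtain ⟨F, -, hF⟩ := Finset.exists_le_of_sum_le
    (Finset.univ_nonempty (α := Fin M → Fin N → Fin (t + 1))) hsum
  refine ⟨fun r j => decide (F r j = 0), ?_⟩
  have h2 := Finset.card_filter_add_card_filter_not (s := PS) (fun S =>
              ∀ j ∈ S, ∃ r : Fin M, decide (F r j = 0) = true ∧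
                ∀ j' ∈ S, j' ≠ j → decide (F r j' = 0) = false)
  have h3 : ((PS.filter fun S => ¬ ∀ j ∈ S, ∃ r : Fin M, decide (F r j = 0) = true ∧
                ∀ j' ∈ S, j' ≠ j → decide (F r j' = 0) = false).card : ℝ) ≤ w F := by
    rw [← Finset.sum_boole]
    refine Finset.sum_le_sum fun S hS => ?_
    by_cases h : ∀ j ∈ S, ∃ r : Fin M, decide (F r j = 0) = true ∧
                ∀ j' ∈ S, j' ≠ j → decide (F r j' = 0) = false
    · rw [if_neg (not_not.2 h)]
      exact Finset.sum_nonneg fun i _ => by split_ifs <;> norm_num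
    · rw [if_pos h]
      push Not at h
      obtain ⟨j, hj, h⟩ := h
      have hP : P F S j := by
        intro r hr
        obtain ⟨j', a1, a2, a3⟩ := h r (by simpa using hr.1)
        exact hr.2 j' a1 a2 (by simpa using a3)
      have := Finset.single_le_sum (f := fun j => if P F S j then (1 : ℝ) else 0)
        (fun i _ => by split_ifs <;> norm_num) hj
      simpa [hP] using this
  have h4 := congrArg (Nat.cast : ℕ → ℝ) h2
  rw [Nat.cast_add, hPS] at h4
  have h5 : (1 - ε) * (N.choose (t + 1) : ℝ) ≤ ((PS.filter fun S =>
              ∀ j ∈ S, ∃ r : Fin M, decide (F r j = 0) = true ∧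
                ∀ j' ∈ S, j' ≠ j → decide (F r j' = 0) = false).card : ℝ) := by
    linarith
  convert h5

/-- Theorem 2 of the paper: for every constant `a > 1` there are a constant `C > 0` and a
threshold `t₀` such that for all `t ≥ t₀`, all `N > t` and all `ε` with
`2(t+1)·e^{-at} < ε < 1`, there exists an `M×N` binary matrix which is type-2
`(t,ε)`-disjunct — at least `(1-ε)·C(N,t+1)` of the `(t+1)`-element sets of columns are such
that every column of the set has a row where it is `1` and the other columns of the set are
`0` (i.e. the corresponding submatrix contains `t+1` rows forming a permutation matrix) —
with `M ≤ C·t^{3/2}·ln N·√(ln(2(t+1)/ε)) / (ln t − ln ln(2(t+1)/ε) + ln(4a))`. -/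
theorem stmt_18 (a : ℝ) (ha : 1 < a) :
    ∃ Cst : ℝ, 0 < Cst ∧ ∃ t₀ : ℕ, ∀ t : ℕ, t₀ ≤ t → ∀ N : ℕ, t < N →
      ∀ ε : ℝ, 2 * ((t : ℝ) + 1) * Real.exp (-a * (t : ℝ)) < ε → ε < 1 →
        ∃ M : ℕ, ∃ A : Fin M → Fin N → Bool,
          ((1 - ε) * (N.choose (t + 1) : ℝ) ≤
            ((((Finset.univ : Finset (Fin N)).powersetCard (t + 1)).filter fun S =>
              ∀ j ∈ S, ∃ r : Fin M, A r j = true ∧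
                ∀ j' ∈ S, j' ≠ j → A r j' = false).card : ℝ)) ∧
          (M : ℝ) ≤ Cst * (t : ℝ) ^ ((3 : ℝ) / 2) * Real.log (N : ℝ) *
            Real.sqrt (Real.log (2 * ((t : ℝ) + 1) / ε)) /
            (Real.log (t : ℝ) - Real.log (Real.log (2 * ((t : ℝ) + 1) / ε)) +
              Real.log (4 * a)) := by
  have ha0 : 0 < a := by linarith
  refine ⟨72 * Real.sqrt a, by positivity, 1, ?_⟩
  intro t ht N hN ε hε1 hε2
  have ht1 : (1 : ℝ) ≤ t := by exact_mod_cast ht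
  have hε0 : 0 < ε := lt_trans (by positivity) hε1
  set L := Real.log (2 * ((t : ℝ) + 1) / ε) with hL
  have hx0 : 0 < 2 * ((t : ℝ) + 1) / ε := by positivity
  have hexp : Real.exp (-L) = ε / (2 * ((t : ℝ) + 1)) := by
    rw [Real.exp_neg, hL, Real.exp_log hx0, inv_div]
  have hL1 : 1 ≤ L := by
    rw [hL, Real.le_log_iff_exp_le hx0, le_div_iff₀ hε0]
    have := Real.exp_one_lt_d9
    nlinarith [Real.exp_pos 1]
  have hLat : L < a * t := by
    rw [hL, Real.log_lt_iff_lt_exp hx0, div_lt_iff₀ hε0]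
    have h := mul_lt_mul_of_pos_left hε1 (Real.exp_pos (a * t))
    have e : Real.exp (a * t) * Real.exp (-a * t) = 1 := by
      rw [← Real.exp_add]; simp
    calc 2 * ((t : ℝ) + 1) = Real.exp (a * t) * (2 * ((t : ℝ) + 1) * Real.exp (-a * t)) := by
          linear_combination (-(2 * ((t : ℝ) + 1))) * e
      _ < _ := h
  have hL0 : 0 < L := by linarith
  obtain ⟨A, hA⟩ := aux_exists t N ⌈4 * ((t : ℝ) + 1) * L⌉₊ ht hN ε (by
    have h1 : L ≤ (⌈4 * ((t : ℝ) + 1) * L⌉₊ : ℝ) / (4 * ((t : ℝ) + 1)) := by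
      rw [le_div_iff₀ (by positivity), mul_comm]
      exact Nat.le_ceil _
    have h2 := Real.exp_le_exp.2 (neg_le_neg h1)
    rw [hexp] at h2
    calc _ ≤ ((t : ℝ) + 1) * (ε / (2 * ((t : ℝ) + 1))) :=
          mul_le_mul_of_nonneg_left h2 (by positivity)
      _ = ε / 2 := by field_simp
      _ ≤ ε := by linarith)
  refine ⟨_, A, hA, ?_⟩
  have hM : (⌈4 * ((t : ℝ) + 1) * L⌉₊ : ℝ) ≤ 9 * t * L := by
    have := (Nat.ceil_lt_add_one (a := 4 * ((t : ℝ) + 1) * L) (by positivity)).le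
    nlinarith [mul_le_mul ht1 hL1 zero_le_one (by linarith)]
  have ht0 : (0 : ℝ) < t := by linarith
  have hD : Real.log (t : ℝ) - Real.log L + Real.log (4 * a) = Real.log (4 * (a * t / L)) := by
    rw [← Real.log_div ht0.ne' hL0.ne', ← Real.log_mul (by positivity) (by positivity)]
    congr 1; ring
  rw [hD]
  have hy : 1 < a * t / L := by rwa [lt_div_iff₀ hL0, one_mul]
  have hDpos : 0 < Real.log (4 * (a * t / L)) := Real.log_pos (by linarith)
  have hDle : Real.log (4 * (a * t / L)) ≤ 4 * Real.sqrt (a * t / L) := by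
    have hs : 0 < Real.sqrt (a * t / L) := Real.sqrt_pos.2 (by linarith)
    have e : 4 * (a * t / L) = (2 * Real.sqrt (a * t / L)) ^ 2 := by
      rw [mul_pow, Real.sq_sqrt (by linarith)]; norm_num
    rw [e, Real.log_pow]
    have := Real.log_le_sub_one_of_pos (x := 2 * Real.sqrt (a * t / L)) (by positivity)
    push_cast
    linarith
  rw [le_div_iff₀ hDpos]
  have hN2 : 1 / 2 ≤ Real.log N := by
    have h2 : (2 : ℝ) ≤ N := by exact_mod_cast (by omega : 2 ≤ N)
    have := Real.log_le_log (by norm_num) h2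
    linarith [Real.log_two_gt_d9]
  have ht32 : (t : ℝ) ^ ((3 : ℝ) / 2) = t * Real.sqrt t := by
    rw [Real.sqrt_eq_rpow, show (3 : ℝ) / 2 = 1 + 1 / 2 by norm_num, Real.rpow_add ht0, Real.rpow_one]
  have hsq : Real.sqrt (a * t / L) = Real.sqrt a * Real.sqrt t / Real.sqrt L := by
    rw [Real.sqrt_div (by positivity), Real.sqrt_mul ha0.le]
  have hLL : L = Real.sqrt L * Real.sqrt L := (Real.mul_self_sqrt hL0.le).symm
  have hsL : 0 < Real.sqrt L := Real.sqrt_pos.2 hL0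
  have hLs : L * Real.sqrt (a * t / L) = Real.sqrt a * Real.sqrt t * Real.sqrt L := by
    rw [hsq, mul_div_assoc', div_eq_iff hsL.ne']
    linear_combination (Real.sqrt a * Real.sqrt t) * hLL
  rw [ht32]
  calc _ ≤ (9 * t * L) * (4 * Real.sqrt (a * t / L)) :=
        mul_le_mul hM hDle hDpos.le (by positivity)
    _ = 72 * Real.sqrt a * (t * Real.sqrt t) * (1 / 2) * Real.sqrt L := by
        linear_combination 36 * t * hLs
    _ ≤ _ := by gcongr
end
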